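/- arXiv:2003.10301 — 2 statements merged into one kernel-verified Lean document; each statement's English description precedes it below -/
import Mathlib

section
/- Let Λ = Z_p[[X]] and M a finitely generated Λ-module. There is an exact sequence 0 → M_tor → M → M^{++} → T₂(M) → 0 where M_tor is the maximal torsion submodule, M^{++} = Hom_Λ(Hom_Λ(M,Λ),Λ) is the reflexive hull (a free Λ-module), and T₂(M) is finite. -/
section Helpers

variable {R : Type*} [CommRing R] [IsDomain R]

lemma aux_div {M : Type*} [AddCommGroup M] [Module R M] (a : R) (ha : a ≠ 0)
    (φ : M →ₗ[R] R) (h : ∀ m, a ∣ φ m) : ∃ ψ : M →ₗ[R] R, φ = a • ψ := by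
  choose g hg using h
  refine ⟨{ toFun := g, map_add' := ?_, map_smul' := ?_ }, ?_⟩
  · intro x y
    apply mul_left_cancel₀ ha
    rw [← hg, map_add, hg, hg, mul_add]
  · intro r x
    apply mul_left_cancel₀ ha
    rw [← hg, map_smul, hg, RingHom.id_apply, smul_eq_mul, smul_eq_mul]
    ring
  · ext m
    simpa using hg m

lemma aux_exists_dual {M : Type*} [AddCommGroup M] [Module R M]
    [Module.FinitePresentation R M] (m : M) (hm : m ∉ Submodule.torsion R M) :
    ∃ f : M →ₗ[R] R, f m ≠ 0 := by
  let S := nonZeroDivisors R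
  let K := FractionRing R
  let N := LocalizedModule S M
  let ι : M →ₗ[R] N := LocalizedModule.mkLinearMap S M
  have h1 : ι m ≠ 0 := by
    intro h
    apply hm
    obtain ⟨c, hc⟩ := (IsLocalizedModule.eq_zero_iff S ι).1 h
    exact ⟨c, hc⟩
  let : Module K N := inferInstanceAs (Module (Localization S) (LocalizedModule S M))
  have : IsScalarTower R K N :=
    inferInstanceAs (IsScalarTower R (Localization S) (LocalizedModule S M))
  obtain ⟨g, hg⟩ : ∃ g : Module.Dual K N, g (ι m) ≠ 0 := by
    by_contra! hcon
    exact h1 ((Module.forall_dual_apply_eq_zero_iff K (ι m)).1 hcon)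
  obtain ⟨h, s, hs⟩ := Module.FinitePresentation.exists_lift_of_isLocalizedModule S
    (Algebra.linearMap R K) ((g.restrictScalars R) ∘ₗ ι)
  refine ⟨h, fun h0 => hg ?_⟩
  have := LinearMap.congr_fun hs m
  simp only [LinearMap.comp_apply, h0, map_zero, LinearMap.smul_apply] at this
  have h2 : (s : R) • g (ι m) = 0 := this.symm
  rw [Algebra.smul_def, mul_eq_zero] at h2
  rcases h2 with h2 | h2
  · exfalso
    have := (IsFractionRing.injective R K) (h2.trans (map_zero _).symm)
    exact nonZeroDivisors.ne_zero s.2 this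
  · exact h2

lemma aux_ker {M : Type*} [AddCommGroup M] [Module R M]
    [Module.FinitePresentation R M] :
    LinearMap.ker (Module.Dual.eval R M) = Submodule.torsion R M := by
  apply le_antisymm
  · intro m hm
    by_contra h
    obtain ⟨f, hf⟩ := aux_exists_dual m h
    exact hf (by simpa using LinearMap.congr_fun (LinearMap.mem_ker.1 hm) f)
  · rintro m ⟨c, hc⟩
    rw [LinearMap.mem_ker]
    ext f
    have h1 : (c : R) • f m = 0 := by
      rw [← map_smul]
      have : (c : R) • m = 0 := hc
      rw [this, map_zero]
    simpa [nonZeroDivisors.ne_zero c.2] using h1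

/-- If the quotient by `P` has no functionals, `P` does not contain the annihilator. -/
lemma aux_prime [IsNoetherianRing R] {C : Type*} [AddCommGroup C] [Module R C] [Module.Finite R C]
    (P : Ideal R) [hP : P.IsPrime] (h : ∀ g : C →ₗ[R] (R ⧸ P), g = 0) :
    ¬ (Module.annihilator R C ≤ P) := by
  intro hle
  let D := C ⧸ (P • (⊤ : Submodule R C))
  have : Module.Finite (R ⧸ P) D := Module.Finite.of_restrictScalars_finite R (R ⧸ P) D
  have htor : Module.IsTorsion (R ⧸ P) D := by
    intro d
    by_contra hd
    have hd' : d ∉ Submodule.torsion (R ⧸ P) D := hd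
    have : Module.FinitePresentation (R ⧸ P) D := Module.finitePresentation_of_finite _ _
    obtain ⟨f, hf⟩ := aux_exists_dual d hd'
    obtain ⟨c, rfl⟩ := Submodule.mkQ_surjective _ d
    have := LinearMap.congr_fun (h ((f.restrictScalars R) ∘ₗ Submodule.mkQ _)) c
    exact hf this
  obtain ⟨s, hs, hs0⟩ := Submodule.annihilator_top_inter_nonZeroDivisors htor
  obtain ⟨s, rfl⟩ := Ideal.Quotient.mk_surjective s
  have hsP : s ∉ P := fun hh => nonZeroDivisors.ne_zero hs0 (Ideal.Quotient.eq_zero_iff_mem.2 hh)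
  have hr : LinearMap.range (algebraMap R (Module.End R C) s) ≤ P • ⊤ := by
    rintro _ ⟨c, rfl⟩
    have := Submodule.mem_annihilator.1 hs (Submodule.Quotient.mk c) trivial
    have h2 : (Submodule.Quotient.mk (s • c) : D) = 0 := this
    simpa using (Submodule.Quotient.mk_eq_zero _).1 h2
  obtain ⟨q, hq, hdeg, hcoef, hev⟩ :=
    LinearMap.exists_monic_and_natDegree_eq_and_coeff_mem_pow_and_aeval_eq_zero R _ P hr
  rw [Polynomial.aeval_algebraMap_apply] at hev
  have h3 : q.eval s ∈ P := by
    apply hle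
    rw [Module.mem_annihilator]
    intro c
    simpa using LinearMap.congr_fun hev c
  rw [Polynomial.eval_eq_sum_range, Finset.sum_range_succ, hq.coeff_natDegree, one_mul] at h3
  have h4 : ∑ i ∈ Finset.range q.natDegree, q.coeff i * s ^ i ∈ P := by
    apply Ideal.sum_mem
    intro i hi
    apply Ideal.mul_mem_right
    exact Ideal.pow_le_self (by have := Finset.mem_range.1 hi; omega) (hcoef i)
  exact hsP (hP.mem_of_pow_mem _ ((Ideal.add_mem_iff_right _ h4).1 h3))

/-- Main commutative algebra step. -/
lemma aux_main [IsNoetherianRing R] {M : Type*} [AddCommGroup M] [Module R M] [Module.Finite R M]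
    [Module.Free R (Module.Dual R M)]
    [Module.Free R (Module.Dual R (Module.Dual R M))] :
    ∃ a : R, a ≠ 0 ∧
      a ∈ Module.annihilator R ((Module.Dual R (Module.Dual R M)) ⧸
        LinearMap.range (Module.Dual.eval R M)) ∧
      ∀ P ∈ (Ideal.span {a}).minimalPrimes,
        ¬ (Module.annihilator R ((Module.Dual R (Module.Dual R M)) ⧸
        LinearMap.range (Module.Dual.eval R M)) ≤ P) := by
  set F := Module.Dual R (Module.Dual R M)
  set C := F ⧸ LinearMap.range (Module.Dual.eval R M) with hC
  have : Module.Finite R (Module.Dual R M) := inferInstance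
  have huniq : ∀ ψ : F →ₗ[R] R, (∀ m, ψ (Module.Dual.eval R M m) = 0) → ψ = 0 := by
    intro ψ hψ
    obtain ⟨χ, rfl⟩ := (Module.bijective_dual_eval R (Module.Dual R M)).2 ψ
    have : χ = 0 := by
      ext m
      exact hψ m
    rw [this, map_zero]
  have hext : ∀ χ : M →ₗ[R] R, ∃ ψ : F →ₗ[R] R, ∀ m, ψ (Module.Dual.eval R M m) = χ m :=
    fun χ => ⟨Module.Dual.eval R _ χ, fun m => rfl⟩
  have : Module.FinitePresentation R C := Module.finitePresentation_of_finite _ _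
  have htor : Module.IsTorsion R C := by
    intro d
    by_contra hd
    obtain ⟨f, hf⟩ := aux_exists_dual (R := R) d hd
    obtain ⟨c, rfl⟩ := Submodule.mkQ_surjective _ d
    have h0 := huniq (f ∘ₗ Submodule.mkQ _) (fun m => by
      have : Submodule.mkQ (LinearMap.range (Module.Dual.eval R M)) (Module.Dual.eval R M m) = 0 := by
        simp
      rw [LinearMap.comp_apply, this, map_zero])
    exact hf (LinearMap.congr_fun h0 c)
  obtain ⟨a, ha, ha0⟩ := Submodule.annihilator_top_inter_nonZeroDivisors htor
  have ha0 := nonZeroDivisors.ne_zero ha0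
  refine ⟨a, ha0, ?_, ?_⟩
  · simpa [Submodule.annihilator_top] using ha
  intro P hP
  have := hP.1.1
  apply aux_prime
  have hass : P ∈ associatedPrimes R (R ⧸ Ideal.span {a}) := by
    apply Module.associatedPrimes.minimalPrimes_annihilator_subset_associatedPrimes
    rwa [Ideal.annihilator_quotient]
  obtain ⟨_, x, hx⟩ := isAssociatedPrime_iff.1 hass
  obtain ⟨b, rfl⟩ := Ideal.Quotient.mk_surjective x
  have hPb : ∀ r, r ∈ P ↔ a ∣ b * r := by
    intro r
    conv_lhs => rw [hx]
    rw [Submodule.mem_colon_singleton, Submodule.mem_bot, ← Ideal.mem_span_singleton,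
      ← Ideal.Quotient.eq_zero_iff_mem, mul_comm b r, map_mul, Algebra.smul_def]
    rfl
  intro g
  let π := Submodule.mkQ (LinearMap.range (Module.Dual.eval R M))
  obtain ⟨φ, hφ⟩ := Module.projective_lifting_property (Submodule.mkQ P) (g ∘ₗ π)
    (Submodule.mkQ_surjective _)
  have hφ' : ∀ y, Submodule.mkQ P (φ y) = g (π y) := fun y => LinearMap.congr_fun hφ y
  have h1 : ∀ m, a ∣ ((b • φ) ∘ₗ Module.Dual.eval R M) m := by
    intro m
    have h2 := hφ' (Module.Dual.eval R M m)
    have h3 : π (Module.Dual.eval R M m) = 0 := by simp [π]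
    rw [h3, map_zero] at h2
    exact (hPb _).1 ((Submodule.Quotient.mk_eq_zero P).1 h2)
  obtain ⟨χ, hχ⟩ := aux_div a ha0 _ h1
  obtain ⟨ψ, hψ⟩ := hext χ
  have h4 : b • φ - a • ψ = 0 := by
    apply huniq
    intro m
    have := LinearMap.congr_fun hχ m
    simp only [LinearMap.comp_apply, LinearMap.smul_apply] at this
    rw [LinearMap.sub_apply, LinearMap.smul_apply, LinearMap.smul_apply, hψ, this, sub_self]
  refine LinearMap.ext fun c => ?_
  obtain ⟨y, rfl⟩ := Submodule.mkQ_surjective _ c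
  change g (π y) = 0
  rw [← hφ']
  apply (Submodule.Quotient.mk_eq_zero P).2
  rw [hPb]
  have := LinearMap.congr_fun (sub_eq_zero.1 h4) y
  exact ⟨ψ y, this⟩

end Helpers

open Pointwise in
lemma aux_free (A : Type*) [CommRing A] [IsDomain A] [IsPrincipalIdealRing A] [IsLocalRing A]
    (N : Type*) [AddCommGroup N] [Module (PowerSeries A) N] [Module.Finite (PowerSeries A) N] :
    Module.Free (PowerSeries A) (Module.Dual (PowerSeries A) N) := by
  set R := PowerSeries A
  have : IsNoetherianRing R := inferInstance
  set D := Module.Dual R N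
  have : Module.FinitePresentation R D := Module.finitePresentation_of_finite _ _
  let x : R := PowerSeries.X
  have hx0 : x ≠ 0 := PowerSeries.X_ne_zero
  have hxp : (Ideal.span {x}).IsPrime := PowerSeries.span_X_isPrime
  have hjac : x ∈ (⊥ : Ideal R).jacobson := by
    rw [IsLocalRing.jacobson_eq_maximalIdeal _ bot_ne_top, IsLocalRing.mem_maximalIdeal]
    exact PowerSeries.X_prime.not_isUnit
  have hreg : IsSMulRegular D x := by
    intro f g h
    refine LinearMap.ext fun n => ?_
    exact mul_left_cancel₀ hx0 (LinearMap.congr_fun h n)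
  rw [← Module.free_quotSMulTop_iff_free R D hjac hreg]
  have : IsDomain (R ⧸ Ideal.span {x}) := Ideal.Quotient.isDomain _
  have : IsPrincipalIdealRing (R ⧸ Ideal.span {x}) := by
    refine IsPrincipalIdealRing.of_surjective
      ((Ideal.Quotient.mk (Ideal.span {x})).comp (PowerSeries.C (R := A))) ?_
    intro y
    obtain ⟨y, rfl⟩ := Ideal.Quotient.mk_surjective y
    refine ⟨PowerSeries.constantCoeff y, ?_⟩
    rw [RingHom.comp_apply, Ideal.Quotient.eq, Ideal.mem_span_singleton, PowerSeries.X_dvd_iff,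
      map_sub]
    exact sub_eq_zero.2 (PowerSeries.constantCoeff_C _)
  have : Module.Finite (R ⧸ Ideal.span {x}) (QuotSMulTop x D) :=
    Module.Finite.of_restrictScalars_finite R _ _
  have : Module.IsTorsionFree (R ⧸ Ideal.span {x}) (QuotSMulTop x D) := by
    rw [Module.isTorsionFree_iff_smul_eq_zero]
    intro r d h
    obtain ⟨r, rfl⟩ := Ideal.Quotient.mk_surjective r
    obtain ⟨φ, rfl⟩ := Submodule.mkQ_surjective _ d
    have h2 : (Submodule.Quotient.mk (r • φ) : QuotSMulTop x D) = 0 := h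
    rw [Submodule.Quotient.mk_eq_zero] at h2
    obtain ⟨χ, -, hχ⟩ := (Submodule.mem_smul_pointwise_iff_exists _ _ _).1 h2
    rw [or_iff_not_imp_left]
    intro hr
    rw [Ideal.Quotient.eq_zero_iff_mem, Ideal.mem_span_singleton] at hr
    have h3 : ∀ n, x ∣ φ n := by
      intro n
      have : x ∣ r * φ n := ⟨χ n, (LinearMap.congr_fun hχ n).symm⟩
      exact (PowerSeries.X_prime.dvd_or_dvd this).resolve_left hr
    obtain ⟨ψ, hψ⟩ := aux_div x hx0 φ h3
    apply (Submodule.Quotient.mk_eq_zero _).2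
    rw [hψ]
    exact Submodule.smul_mem_pointwise_smul _ _ _ trivial
  exact Module.free_of_finite_type_torsion_free'

lemma aux_height (A : Type*) [CommRing A] [IsDomain A] [IsPrincipalIdealRing A] [IsLocalRing A]
    (a : PowerSeries A) (ha : a ≠ 0) (P : Ideal (PowerSeries A)) [P.IsPrime] (haP : a ∈ P)
    (hP : P ∉ (Ideal.span {a}).minimalPrimes) : P = IsLocalRing.maximalIdeal (PowerSeries A) := by
  set m := IsLocalRing.maximalIdeal (PowerSeries A) with hm
  by_contra hne
  have hPm : P < m := lt_of_le_of_ne (IsLocalRing.le_maximalIdeal (Ideal.IsPrime.ne_top ‹_›)) hne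
  obtain ⟨Q, hQ, hQP⟩ := Ideal.exists_minimalPrimes_le
    ((Ideal.span_singleton_le_iff_mem _).2 haP)
  have hQp := hQ.1.1
  have haQ : a ∈ Q := (Ideal.span_singleton_le_iff_mem _).1 hQ.1.2
  have hlt : Q < P := lt_of_le_of_ne hQP (by rintro rfl; exact hP hQ)
  have h0 : (⊥ : Ideal (PowerSeries A)) < Q := bot_lt_iff_ne_bot.2 (by
    rintro rfl; exact ha (by simpa using haQ))
  have : IsNoetherianRing (PowerSeries A) := inferInstance
  have : (⊥ : Ideal (PowerSeries A)).IsPrime := Ideal.isPrime_bot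
  have hmp : m.IsPrime := inferInstance
  have h1 := Ideal.height_strict_mono_of_isPrime_of_isPrime h0
  have h2 := Ideal.height_strict_mono_of_isPrime_of_isPrime hlt
  have h3 := Ideal.height_strict_mono_of_isPrime_of_isPrime hPm
  have h4 := Ideal.height_le_spanFinrank m hmp.ne_top
  have hX : PowerSeries.X ∈ m := by
    rw [hm, IsLocalRing.mem_maximalIdeal]
    exact PowerSeries.X_prime.not_isUnit
  have h5 := PowerSeries.spanFinrank_le_spanFinrank_map_constantCoeff_add_one_of_X_mem hX
  have h6 : (m.map (PowerSeries.constantCoeff (R := A))).spanFinrank ≤ 1 := by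
    obtain ⟨c, hc⟩ := (IsPrincipalIdealRing.principal
      (m.map (PowerSeries.constantCoeff (R := A)))).principal
    rw [hc]
    exact le_trans (Submodule.spanFinrank_span_le_ncard_of_finite (by simp)) (by simp)
  have h7 : m.height ≤ 2 := h4.trans (by exact_mod_cast h5.trans (by omega))
  have e1 := Order.add_one_le_of_lt h1
  have e2 := Order.add_one_le_of_lt h2
  have e3 := Order.add_one_le_of_lt h3
  have : (3 : ℕ∞) ≤ 2 := by
    calc (3 : ℕ∞) = 0 + 1 + 1 + 1 := by norm_num
      _ ≤ m.height := by
        refine le_trans ?_ e3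
        gcongr
        refine le_trans ?_ e2
        gcongr
        refine le_trans ?_ e1
        gcongr
        exact zero_le
      _ ≤ 2 := h7
  exact absurd this (by decide)

lemma aux_residue (p : ℕ) [Fact p.Prime] :
    Finite (PowerSeries ℤ_[p] ⧸ IsLocalRing.maximalIdeal (PowerSeries ℤ_[p])) := by
  let f : PowerSeries ℤ_[p] →+* ZMod p := PadicInt.toZMod.comp PowerSeries.constantCoeff
  have hf : Function.Surjective f := ZMod.ringHom_surjective f
  have hk : RingHom.ker f = IsLocalRing.maximalIdeal (PowerSeries ℤ_[p]) :=
    IsLocalRing.eq_maximalIdeal (RingHom.ker_isMaximal_of_surjective f hf)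
  rw [← hk]
  have : NeZero p := ⟨(Fact.out : p.Prime).ne_zero⟩
  exact Finite.of_equiv _ (RingHom.quotientKerEquivOfSurjective hf).symm.toEquiv

lemma aux_finite {R : Type*} [CommRing R] [IsNoetherianRing R] (m : Ideal R) [Finite (R ⧸ m)]
    (C : Type*) [AddCommGroup C] [Module R C] [Module.Finite R C]
    (h : ∀ P : Ideal R, P.IsPrime → Module.annihilator R C ≤ P → m ≤ P) : Finite C := by
  have hrad : m ≤ (Module.annihilator R C).radical := by
    rw [Ideal.radical_eq_sInf]
    exact le_sInf fun P hP => h P hP.2 hP.1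
  obtain ⟨n, hn⟩ := Ideal.exists_pow_le_of_le_radical_of_fg hrad (IsNoetherian.noetherian m)
  have := Ideal.finite_quotient_pow (IsNoetherian.noetherian m) n
  have htor : Module.IsTorsionBySet R C (m ^ n : Ideal R) := fun c r =>
    Module.mem_annihilator.1 (hn r.2) c
  let := htor.module
  have : IsScalarTower R (R ⧸ m ^ n) C := htor.isScalarTower
  have : Module.Finite (R ⧸ m ^ n) C := Module.Finite.of_restrictScalars_finite R _ _
  exact Module.finite_of_finite (R ⧸ m ^ n)

/-- Λ = ℤ_p[[X]], M a finitely generated Λ-module.  There is an exact sequence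
0 → M_tor → M → M^{++} → T₂(M) → 0, where M^{++} = Hom_Λ(Hom_Λ(M,Λ),Λ) is the
reflexive hull (a free Λ-module), the middle map is the canonical evaluation
map (whose kernel is the torsion submodule M_tor), and T₂(M) (its cokernel) is
finite. -/
theorem stmt10 (p : ℕ) [Fact p.Prime]
    (M : Type*) [AddCommGroup M] [Module (PowerSeries ℤ_[p]) M]
    [Module.Finite (PowerSeries ℤ_[p]) M] :
    LinearMap.ker (Module.Dual.eval (PowerSeries ℤ_[p]) M) =
        Submodule.torsion (PowerSeries ℤ_[p]) M ∧
      Module.Free (PowerSeries ℤ_[p])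
        (Module.Dual (PowerSeries ℤ_[p]) (Module.Dual (PowerSeries ℤ_[p]) M)) ∧
      Finite ((Module.Dual (PowerSeries ℤ_[p]) (Module.Dual (PowerSeries ℤ_[p]) M)) ⧸
        LinearMap.range (Module.Dual.eval (PowerSeries ℤ_[p]) M)) := by
  have hfp : Module.FinitePresentation (PowerSeries ℤ_[p]) M :=
    Module.finitePresentation_of_finite _ _
  have hf1 := aux_free ℤ_[p] M
  have hf2 := aux_free ℤ_[p] (Module.Dual (PowerSeries ℤ_[p]) M)
  refine ⟨aux_ker, hf2, ?_⟩
  obtain ⟨a, ha0, ha, hmin⟩ := aux_main (R := PowerSeries ℤ_[p]) (M := M)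
  have := aux_residue p
  apply aux_finite (IsLocalRing.maximalIdeal (PowerSeries ℤ_[p]))
  intro P hP hle
  exact (aux_height ℤ_[p] a ha0 P (hle ha) (fun h => hmin P h hle)).ge
end

section
/- Let Λ = Z_p[[X]] and let M₁, M₂ be finitely generated Λ-modules, each of Λ-rank one, each with μ-invariant zero and with no nontrivial finite Λ-submodules. If M₁/pM₁ ≅ M₂/pM₂ as modules over Λ/pΛ ≅ F_p[[X]], then λ(M₁) + c(M₁) = λ(M₂) + c(M₂), where c(M) is defined by |T₂(M)[p]| = p^{c(M)} and T₂(M) is the finite cokernel of the map from M to its reflexive hull. -/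
namespace Iwa
open PowerSeries

theorem mem_torsion_of_dual {R M : Type*} [CommRing R] [IsDomain R] [IsNoetherianRing R]
    [AddCommGroup M] [Module R M] [Module.Finite R M] (x : M)
    (hx : ∀ φ : Module.Dual R M, φ x = 0) : x ∈ Submodule.torsion R M := by
  let S := nonZeroDivisors R
  let f := LocalizedModule.mkLinearMap S M
  have : f x = 0 := by
    rw [← Module.forall_dual_apply_eq_zero_iff (FractionRing R) (f x)]
    intro φ
    have : Module.FinitePresentation R M := Module.finitePresentation_of_finite R M
    obtain ⟨h, s, hs⟩ := Module.FinitePresentation.exists_lift_of_isLocalizedModule S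
      (Algebra.linearMap R (FractionRing R)) ((φ.restrictScalars R) ∘ₗ f)
    have h1 := congrArg (fun l => l x) hs
    simp only [LinearMap.comp_apply, hx h, map_zero, LinearMap.smul_apply,
      LinearMap.restrictScalars_apply] at h1
    rw [Submonoid.smul_def, Algebra.smul_def] at h1
    have h2 := (mul_eq_zero.mp h1.symm)
    rcases h2 with h2 | h2
    · exact absurd ((IsFractionRing.to_map_eq_zero_iff).mp h2) (nonZeroDivisors.ne_zero s.2)
    · exact h2
  rw [IsLocalizedModule.eq_zero_iff S f] at this
  exact this

variable {p : ℕ} [Fact p.Prime]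

theorem p_dvd_iff (f : PowerSeries ℤ_[p]) :
    (p : PowerSeries ℤ_[p]) ∣ f ↔ ∀ i, (p : ℤ_[p]) ∣ coeff i f := by
  have hc : (p : PowerSeries ℤ_[p]) = C (p : ℤ_[p]) := by simp
  rw [hc]
  constructor
  · rintro ⟨g, rfl⟩ i
    exact ⟨coeff i g, by rw [coeff_C_mul]⟩
  · intro h
    choose g hg using h
    exact ⟨PowerSeries.mk g, by ext i; rw [coeff_C_mul, coeff_mk, hg]⟩

theorem p_ne_zero : (p : PowerSeries ℤ_[p]) ≠ 0 := by
  intro h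
  have := congrArg (constantCoeff (R := ℤ_[p])) h
  rw [map_natCast, map_zero] at this
  exact (Fact.out : p.Prime).ne_zero (by exact_mod_cast this)

theorem p_not_unit : ¬ IsUnit (p : PowerSeries ℤ_[p]) := by
  intro h
  have := h.map (constantCoeff (R := ℤ_[p]))
  rw [map_natCast] at this
  exact PadicInt.p_nonunit this

theorem residue_ne (g : PowerSeries ℤ_[p]) (hg : ¬ (p : PowerSeries ℤ_[p]) ∣ g) :
    g.map (IsLocalRing.residue ℤ_[p]) ≠ 0 := by
  intro h
  apply hg
  rw [p_dvd_iff]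
  intro i
  have := congrArg (coeff i) h
  rw [coeff_map, map_zero, IsLocalRing.residue_eq_zero_iff, PadicInt.maximalIdeal_eq_span_p,
    Ideal.mem_span_singleton] at this
  exact this

theorem finite_quot (g : PowerSeries ℤ_[p]) (hg : ¬ (p : PowerSeries ℤ_[p]) ∣ g) :
    Module.Finite ℤ_[p] (PowerSeries ℤ_[p] ⧸ Ideal.span {g}) := by
  obtain ⟨f, h, H⟩ := exists_isWeierstrassFactorization (residue_ne g hg)
  have := Polynomial.Monic.finite_quotient H.isDistinguishedAt.monic
  exact Module.Finite.equiv H.algEquivQuotient.toLinearEquiv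

theorem p_smul {T : Type*} [AddCommGroup T] [Module (PowerSeries ℤ_[p]) T]
    [Module ℤ_[p] T] [IsScalarTower ℤ_[p] (PowerSeries ℤ_[p]) T] (x : T) :
    (p : ℤ_[p]) • x = (p : PowerSeries ℤ_[p]) • x := by
  rw [Nat.cast_smul_eq_nsmul, Nat.cast_smul_eq_nsmul]

theorem finite_torsion {T : Type*} [AddCommGroup T] [Module (PowerSeries ℤ_[p]) T]
    [Module ℤ_[p] T] [IsScalarTower ℤ_[p] (PowerSeries ℤ_[p]) T]
    [Module.Finite (PowerSeries ℤ_[p]) T] (hT : Module.IsTorsion (PowerSeries ℤ_[p]) T)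
    (hp : ∀ x : T, (p : PowerSeries ℤ_[p]) • x = 0 → x = 0) : Module.Finite ℤ_[p] T := by
  obtain ⟨f, hf, hf0⟩ := Submodule.annihilator_top_inter_nonZeroDivisors hT
  have hf0' : f ≠ 0 := nonZeroDivisors.ne_zero hf0
  obtain ⟨g, hg, hpg⟩ := (FiniteMultiplicity.of_not_isUnit p_not_unit
    hf0').exists_eq_pow_mul_and_not_dvd
  have hpk : ∀ (k : ℕ) (x : T), (p : PowerSeries ℤ_[p]) ^ k • x = 0 → x = 0 := by
    intro k
    induction k with
    | zero => intro x hx; simpa using hx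
    | succ k ih => intro x hx; rw [pow_succ, mul_smul] at hx; exact hp x (ih _ hx)
  have hgT : ∀ x : T, g • x = 0 := by
    intro x
    apply hpk (multiplicity (p : PowerSeries ℤ_[p]) f)
    rw [← mul_smul, ← hg]
    exact Submodule.mem_annihilator.mp hf x trivial
  have htor : Module.IsTorsionBySet (PowerSeries ℤ_[p]) T
      (Ideal.span {g} : Ideal (PowerSeries ℤ_[p])) := by
    rw [Module.isTorsionBySet_span_singleton_iff]
    exact fun x => hgT x
  let := htor.module
  have := finite_quot g hpg
  have : IsScalarTower ℤ_[p] (PowerSeries ℤ_[p] ⧸ Ideal.span {g}) T := htor.isScalarTower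
  have : IsScalarTower (PowerSeries ℤ_[p]) (PowerSeries ℤ_[p] ⧸ Ideal.span {g}) T :=
    htor.isScalarTower
  have : Module.Finite (PowerSeries ℤ_[p] ⧸ Ideal.span {g}) T :=
    Module.Finite.of_restrictScalars_finite (PowerSeries ℤ_[p]) _ T
  exact Module.Finite.trans (PowerSeries ℤ_[p] ⧸ Ideal.span {g}) T

theorem exists_phi {T : Type*} [AddCommGroup T]
    [Module ℤ_[p] T] [Module.Finite ℤ_[p] T]
    (hp : ∀ x : T, (p : ℤ_[p]) • x = 0 → x = 0) :
    ∃ φ : T →+ (Fin (Module.finrank ℤ_[p] T) → ZMod p), Function.Surjective φ ∧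
      ∀ x, φ x = 0 ↔ ∃ y, x = (p : ℤ_[p]) • y := by
  have hpk : ∀ (k : ℕ) (x : T), (p : ℤ_[p]) ^ k • x = 0 → x = 0 := by
    intro k
    induction k with
    | zero => intro x hx; simpa using hx
    | succ k ih => intro x hx; rw [pow_succ, mul_smul] at hx; exact hp x (ih _ hx)
  have : Module.IsTorsionFree ℤ_[p] T := by
    apply Module.IsTorsionFree.of_smul_eq_zero
    intro r x h
    by_cases hr : r = 0
    · exact Or.inl hr
    right
    rw [PadicInt.unitCoeff_spec hr, mul_smul] at h
    exact hpk _ _ ((PadicInt.unitCoeff hr).isUnit.smul_eq_zero.mp h)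
  have : Module.Free ℤ_[p] T := Module.free_of_finite_type_torsion_free'
  let b := Module.finBasis ℤ_[p] T
  refine ⟨AddMonoidHom.comp (AddMonoidHom.compLeft
    (PadicInt.toZMod (p := p)).toAddMonoidHom _) b.equivFun.toAddEquiv.toAddMonoidHom, ?_, ?_⟩
  · intro v
    choose w hw using fun i => ZMod.ringHom_surjective (PadicInt.toZMod (p := p)) (v i)
    refine ⟨b.equivFun.symm w, ?_⟩
    ext i
    change PadicInt.toZMod (b.equivFun (b.equivFun.symm w) i) = v i
    rw [LinearEquiv.apply_symm_apply]
    exact hw i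
  · intro x
    have key : ∀ z : ℤ_[p], PadicInt.toZMod z = 0 ↔ (p : ℤ_[p]) ∣ z := by
      intro z
      rw [← RingHom.mem_ker, PadicInt.ker_toZMod, PadicInt.maximalIdeal_eq_span_p,
        Ideal.mem_span_singleton]
    constructor
    · intro h
      have h1 : ∀ i, (p : ℤ_[p]) ∣ b.equivFun x i := by
        intro i
        rw [← key]
        exact congrFun h i
      choose w hw using h1
      refine ⟨b.equivFun.symm w, b.equivFun.injective ?_⟩
      ext i
      rw [hw, map_smul, LinearEquiv.apply_symm_apply]
      rfl
    · rintro ⟨y, rfl⟩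
      ext i
      change PadicInt.toZMod (b.equivFun ((p : ℤ_[p]) • y) i) = 0
      rw [key]
      exact ⟨b.equivFun y i, by simp⟩

theorem pX_dvd (f : PowerSeries ℤ_[p]) (n : ℕ)
    (h : (p : PowerSeries ℤ_[p]) ∣ X ^ n * f) : (p : PowerSeries ℤ_[p]) ∣ f := by
  rw [p_dvd_iff] at h ⊢
  intro i
  have := h (i + n)
  rwa [coeff_X_pow_mul] at this

theorem dual_p_inj {D : Type*} [AddCommGroup D] [Module (PowerSeries ℤ_[p]) D]
    (f g : Module.Dual (PowerSeries ℤ_[p]) D)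
    (h : (p : PowerSeries ℤ_[p]) • f = (p : PowerSeries ℤ_[p]) • g) : f = g := by
  ext1 d
  have := congrArg (fun l => l d) h
  simp only [LinearMap.smul_apply, smul_eq_mul] at this
  exact mul_left_cancel₀ p_ne_zero this

theorem dual_X {D : Type*} [AddCommGroup D] [Module (PowerSeries ℤ_[p]) D]
    (f g : Module.Dual (PowerSeries ℤ_[p]) D) (n : ℕ)
    (h : (X : PowerSeries ℤ_[p]) ^ n • f = (p : PowerSeries ℤ_[p]) • g) :
    ∃ k : Module.Dual (PowerSeries ℤ_[p]) D, f = (p : PowerSeries ℤ_[p]) • k := by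
  have h1 : ∀ d, (p : PowerSeries ℤ_[p]) ∣ f d := by
    intro d
    apply pX_dvd (f d) n
    refine ⟨g d, ?_⟩
    have := congrArg (fun l => l d) h
    simpa only [LinearMap.smul_apply, smul_eq_mul] using this
  choose k hk using h1
  refine ⟨{ toFun := k, map_add' := ?_, map_smul' := ?_ }, ?_⟩
  · intro x y
    apply mul_left_cancel₀ (p_ne_zero (p := p))
    rw [mul_add, ← hk, ← hk, ← hk, map_add]
  · intro r x
    apply mul_left_cancel₀ (p_ne_zero (p := p))
    rw [RingHom.id_apply, smul_eq_mul, mul_left_comm, ← hk, ← hk, map_smul, smul_eq_mul]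
  · ext1 d
    exact hk d

theorem unit_one_sub (k : ℕ) : IsUnit (1 - (X : PowerSeries ℤ_[p]) ^ (k + 1)) := by
  rw [isUnit_iff_constantCoeff]
  simp

theorem card_W {M : Type*} [AddCommGroup M] [Module (PowerSeries ℤ_[p]) M]
    [Module ℤ_[p] M] [IsScalarTower ℤ_[p] (PowerSeries ℤ_[p]) M]
    [Module.Finite (PowerSeries ℤ_[p]) M]
    (hμ : Set.Finite {x : M | ∃ k : ℕ, (p : PowerSeries ℤ_[p]) ^ k • x = 0})
    (hfin : ∀ S : Submodule (PowerSeries ℤ_[p]) M, (S : Set M).Finite → S = ⊥) (c : ℕ)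
    (hc : Nat.card {x : (Module.Dual (PowerSeries ℤ_[p]) (Module.Dual (PowerSeries ℤ_[p]) M)) ⧸
          LinearMap.range (Module.Dual.eval (PowerSeries ℤ_[p]) M) //
            (p : PowerSeries ℤ_[p]) • x = 0} = p ^ c) :
    Nat.card {x : M ⧸ (Ideal.span {(p : PowerSeries ℤ_[p])} •
        (⊤ : Submodule (PowerSeries ℤ_[p]) M)) // ∃ n : ℕ, (X : PowerSeries ℤ_[p]) ^ n • x = 0} =
      p ^ (Module.finrank ℤ_[p]
          ((Submodule.torsion (PowerSeries ℤ_[p]) M).restrictScalars ℤ_[p]) + c) := by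
  -- no p-torsion
  have hpM : ∀ x : M, (p : PowerSeries ℤ_[p]) • x = 0 → x = 0 := by
    intro x hx
    have h0 : Submodule.torsionBy (PowerSeries ℤ_[p]) M (p : PowerSeries ℤ_[p]) = ⊥ := by
      apply hfin
      apply hμ.subset
      intro y hy
      exact ⟨1, by simpa using hy⟩
    have : x ∈ Submodule.torsionBy (PowerSeries ℤ_[p]) M (p : PowerSeries ℤ_[p]) := by
      simpa using hx
    rw [h0] at this
    simpa using this
  set T := Submodule.torsion (PowerSeries ℤ_[p]) M with hTdef
  set ev := Module.Dual.eval (PowerSeries ℤ_[p]) M with hev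
  set P := Ideal.span {(p : PowerSeries ℤ_[p])} • (⊤ : Submodule (PowerSeries ℤ_[p]) M) with hP
  have memP : ∀ x, x ∈ P ↔ ∃ y, x = (p : PowerSeries ℤ_[p]) • y := by
    intro x
    rw [hP, Submodule.ideal_span_singleton_smul, Submodule.mem_smul_pointwise_iff_exists]
    constructor
    · rintro ⟨y, -, rfl⟩; exact ⟨y, rfl⟩
    · rintro ⟨y, rfl⟩; exact ⟨y, trivial, rfl⟩
  have hevT : ∀ x, ev x = 0 ↔ x ∈ T := by
    intro x
    constructor
    · intro h
      apply mem_torsion_of_dual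
      intro φ
      exact congrArg (fun l => l φ) h
    · rintro ⟨a, ha⟩
      ext1 φ
      have h1 : (a : PowerSeries ℤ_[p]) • φ x = 0 := by
        rw [← map_smul]
        exact (congrArg φ ha).trans (map_zero φ)
      rw [smul_eq_mul] at h1
      exact (mul_eq_zero.mp h1).resolve_left (nonZeroDivisors.ne_zero a.2)
  -- T
  have hTtor : Module.IsTorsion (PowerSeries ℤ_[p]) T := Submodule.torsion_isTorsion
  have hTfin : Module.Finite ℤ_[p] (T.restrictScalars ℤ_[p]) := by
    have : Module.Finite ℤ_[p] T := by
      apply finite_torsion hTtor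
      intro x hx
      apply Subtype.ext
      exact hpM x (congrArg Subtype.val hx)
    exact this
  obtain ⟨φ, hφs, hφk⟩ := exists_phi (p := p) (T := (T.restrictScalars ℤ_[p])) (by
    intro x hx
    apply Subtype.ext
    apply hpM x
    rw [← p_smul]
    exact congrArg Subtype.val hx)
  have hidxT : P.toAddSubgroup.relIndex (T.toAddSubgroup) =
      p ^ Module.finrank ℤ_[p] (T.restrictScalars ℤ_[p]) := by
    let φ' : T.toAddSubgroup →+ (Fin (Module.finrank ℤ_[p] (T.restrictScalars ℤ_[p])) → ZMod p) :=
      AddMonoidHom.mk' (fun x => φ ⟨x.1, x.2⟩) (fun a b => map_add φ ⟨a.1, a.2⟩ ⟨b.1, b.2⟩)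
    have hφs' : Function.Surjective φ' := by
      intro v
      obtain ⟨x, hx⟩ := hφs v
      exact ⟨⟨x.1, x.2⟩, hx⟩
    have hk : P.toAddSubgroup.addSubgroupOf T.toAddSubgroup = φ'.ker := by
      ext x
      rw [AddSubgroup.mem_addSubgroupOf, AddMonoidHom.mem_ker]
      refine Iff.trans ?_ (hφk ⟨x.1, x.2⟩).symm
      refine Iff.trans (memP _) ?_
      constructor
      · rintro ⟨y, hy⟩
        have hyT : y ∈ T := by
          rw [← hevT]
          apply dual_p_inj
          rw [← map_smul, ← hy, smul_zero, hevT]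
          exact x.2
        refine ⟨⟨y, hyT⟩, Subtype.ext ?_⟩
        refine hy.trans ?_
        rw [← p_smul]
        rfl
      · rintro ⟨y, hy⟩
        refine ⟨y, ?_⟩
        rw [← p_smul]
        exact congrArg Subtype.val hy
    rw [AddSubgroup.relIndex, hk]
    refine (AddSubgroup.index_ker φ').trans ?_
    rw [AddMonoidHom.range_eq_top.mpr hφs', AddSubgroup.card_top]
    simp
  -- L
  let L : Submodule (PowerSeries ℤ_[p]) M :=
    { carrier := {m | ∃ n, ev m = (p : PowerSeries ℤ_[p]) • n}
      add_mem' := by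
        rintro a b ⟨n, hn⟩ ⟨n', hn'⟩
        exact ⟨n + n', by rw [map_add, hn, hn', smul_add]⟩
      zero_mem' := ⟨0, by rw [map_zero, smul_zero]⟩
      smul_mem' := by
        rintro r a ⟨n, hn⟩
        exact ⟨r • n, by rw [map_smul, hn, smul_comm]⟩ }
  have memL : ∀ m, m ∈ L ↔ ∃ n, ev m = (p : PowerSeries ℤ_[p]) • n := fun m => Iff.rfl
  choose ν hν using fun m : L => (memL m.1).mp m.2
  let ψ : L.toAddSubgroup →+ (Module.Dual (PowerSeries ℤ_[p])
      (Module.Dual (PowerSeries ℤ_[p]) M)) ⧸ LinearMap.range ev :=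
    AddMonoidHom.mk' (fun m => Submodule.Quotient.mk (ν m)) (by
      intro a b
      rw [← Submodule.Quotient.mk_add]
      congr 1
      apply dual_p_inj
      rw [smul_add, ← hν, ← hν, ← hν, ← map_add]
      rfl)
  have hψk : (T.toAddSubgroup ⊔ P.toAddSubgroup).addSubgroupOf L.toAddSubgroup = ψ.ker := by
    ext x
    rw [AddSubgroup.mem_addSubgroupOf, AddMonoidHom.mem_ker]
    change _ ↔ Submodule.Quotient.mk (ν x) = 0
    rw [Submodule.Quotient.mk_eq_zero, AddSubgroup.mem_sup]
    constructor
    · rintro ⟨y, hy, z, hz, hyz⟩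
      obtain ⟨w, rfl⟩ := (memP z).mp hz
      refine ⟨w, ?_⟩
      apply dual_p_inj
      rw [← hν, ← map_smul, ← hyz, map_add, (hevT y).mpr hy, zero_add]
    · rintro ⟨w, hw⟩
      refine ⟨x - (p : PowerSeries ℤ_[p]) • w, ?_, (p : PowerSeries ℤ_[p]) • w,
        (memP _).mpr ⟨w, rfl⟩, by abel⟩
      change _ ∈ T
      rw [← hevT, map_sub, map_smul, hw, hν x, sub_self]
  have hidxψ : (T.toAddSubgroup ⊔ P.toAddSubgroup).relIndex L.toAddSubgroup = p ^ c := by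
    rw [AddSubgroup.relIndex, hψk, ← hc]
    refine (AddSubgroup.index_ker ψ).trans ?_
    apply Nat.card_congr
    apply Equiv.subtypeEquivRight
    intro y
    constructor
    · rintro ⟨m, rfl⟩
      change (p : PowerSeries ℤ_[p]) • Submodule.Quotient.mk (ν m) = _
      rw [← Submodule.Quotient.mk_smul, ← hν, Submodule.Quotient.mk_eq_zero]
      exact ⟨_, rfl⟩
    · intro hy
      obtain ⟨n, rfl⟩ := Submodule.Quotient.mk_surjective _ y
      rw [← Submodule.Quotient.mk_smul, Submodule.Quotient.mk_eq_zero] at hy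
      obtain ⟨m, hm⟩ := hy
      refine ⟨⟨m, n, hm⟩, ?_⟩
      change Submodule.Quotient.mk (ν ⟨m, n, hm⟩) = _
      congr 1
      apply dual_p_inj
      rw [← hν]
      exact hm
  have hidxL : P.toAddSubgroup.relIndex L.toAddSubgroup =
      p ^ (Module.finrank ℤ_[p] (T.restrictScalars ℤ_[p]) + c) := by
    rw [pow_add, ← hidxT, ← hidxψ, ← AddSubgroup.relIndex_sup_right T.toAddSubgroup]
    refine (AddSubgroup.relIndex_mul_relIndex _ _ _ le_sup_right ?_).symm
    rw [sup_le_iff]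
    constructor
    · intro x hx
      exact ⟨0, by rw [smul_zero]; exact (hevT x).mpr hx⟩
    · intro x hx
      obtain ⟨y, rfl⟩ := (memP x).mp hx
      exact ⟨ev y, map_smul _ _ _⟩
  have hLX : ∀ m ∈ L, ∃ n : ℕ, (X : PowerSeries ℤ_[p]) ^ n • m ∈ P := by
    intro m hm
    have hfi : Finite (L.toAddSubgroup ⧸ P.toAddSubgroup.addSubgroupOf L.toAddSubgroup) := by
      apply Nat.finite_of_card_ne_zero
      change P.toAddSubgroup.relIndex L.toAddSubgroup ≠ 0
      rw [hidxL]
      exact pow_ne_zero _ (Fact.out : p.Prime).ne_zero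
    obtain ⟨i, j, hij, he⟩ := Finite.exists_ne_map_eq_of_infinite
      (fun i : ℕ => (QuotientAddGroup.mk (⟨(X : PowerSeries ℤ_[p]) ^ i • m, L.smul_mem _ hm⟩ :
        L.toAddSubgroup) : L.toAddSubgroup ⧸ P.toAddSubgroup.addSubgroupOf L.toAddSubgroup))
    have he' : ∀ i j : ℕ, i < j → - ((X : PowerSeries ℤ_[p]) ^ j • m) +
        (X : PowerSeries ℤ_[p]) ^ i • m ∈ P →
        ∃ n : ℕ, (X : PowerSeries ℤ_[p]) ^ n • m ∈ P := by
      intro i j hij h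
      refine ⟨i, ?_⟩
      obtain ⟨k, rfl⟩ := Nat.exists_eq_add_of_lt hij
      obtain ⟨u, hu⟩ := unit_one_sub (p := p) k
      have h2 : - ((X : PowerSeries ℤ_[p]) ^ (i + k + 1) • m) +
        (X : PowerSeries ℤ_[p]) ^ i • m = (u : PowerSeries ℤ_[p]) •
          (X : PowerSeries ℤ_[p]) ^ i • m := by
        rw [hu, smul_smul, ← neg_smul, ← add_smul]
        congr 1
        ring
      rw [h2] at h
      have h3 := P.smul_mem (↑u⁻¹ : PowerSeries ℤ_[p]) h
      rwa [smul_smul, Units.inv_mul, one_smul] at h3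
    rcases lt_or_gt_of_ne hij with h | h
    · exact he' i j h (QuotientAddGroup.eq.mp he.symm)
    · exact he' j i h (QuotientAddGroup.eq.mp he)
  rw [← hidxL]
  let θ : L.toAddSubgroup →+ M ⧸ P := P.mkQ.toAddMonoidHom.comp L.toAddSubgroup.subtype
  have hθk : P.toAddSubgroup.addSubgroupOf L.toAddSubgroup = θ.ker := by
    ext x
    rw [AddSubgroup.mem_addSubgroupOf, AddMonoidHom.mem_ker]
    exact (Submodule.Quotient.mk_eq_zero P).symm
  rw [AddSubgroup.relIndex, hθk]
  refine Eq.trans ?_ (AddSubgroup.index_ker θ).symm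
  apply Nat.card_congr
  apply Equiv.subtypeEquivRight
  intro y
  constructor
  · obtain ⟨m, rfl⟩ := Submodule.Quotient.mk_surjective _ y
    rintro ⟨n, hn⟩
    rw [← Submodule.Quotient.mk_smul, Submodule.Quotient.mk_eq_zero] at hn
    obtain ⟨w, hw⟩ := (memP _).mp hn
    have : m ∈ L := by
      refine dual_X (ev m) (ev w) n ?_
      rw [← map_smul, ← map_smul, hw]
    exact ⟨⟨m, this⟩, rfl⟩
  · rintro ⟨m, rfl⟩
    obtain ⟨n, hn⟩ := hLX m.1 m.2
    refine ⟨n, ?_⟩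
    change (X : PowerSeries ℤ_[p]) ^ n • (Submodule.Quotient.mk (m : M) : M ⧸ P) = 0
    rw [← Submodule.Quotient.mk_smul, Submodule.Quotient.mk_eq_zero]
    exact hn

end Iwa


/-- Λ = ℤ_p[[X]].  Let M₁, M₂ be finitely generated Λ-modules of Λ-rank one,
with μ-invariant zero (finite p-power torsion) and with no nontrivial finite
Λ-submodules.  If M₁/pM₁ ≅ M₂/pM₂, then λ(M₁) + c(M₁) = λ(M₂) + c(M₂), where
λ(M) is the ℤ_p-rank of the Λ-torsion submodule and c(M) is defined by
|T₂(M)[p]| = p^{c(M)}, with T₂(M) the cokernel of the map from M to its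
reflexive hull M^{++}. -/
theorem stmt19 (p : ℕ) [Fact p.Prime]
    (M₁ : Type*) [AddCommGroup M₁] [Module (PowerSeries ℤ_[p]) M₁]
    [Module ℤ_[p] M₁] [IsScalarTower ℤ_[p] (PowerSeries ℤ_[p]) M₁]
    [Module.Finite (PowerSeries ℤ_[p]) M₁]
    (M₂ : Type*) [AddCommGroup M₂] [Module (PowerSeries ℤ_[p]) M₂]
    [Module ℤ_[p] M₂] [IsScalarTower ℤ_[p] (PowerSeries ℤ_[p]) M₂]
    [Module.Finite (PowerSeries ℤ_[p]) M₂]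
    (hrk₁ : Module.rank (PowerSeries ℤ_[p]) M₁ = 1)
    (hrk₂ : Module.rank (PowerSeries ℤ_[p]) M₂ = 1)
    (hμ₁ : Set.Finite {x : M₁ | ∃ k : ℕ, (p : PowerSeries ℤ_[p]) ^ k • x = 0})
    (hμ₂ : Set.Finite {x : M₂ | ∃ k : ℕ, (p : PowerSeries ℤ_[p]) ^ k • x = 0})
    (hfin₁ : ∀ S : Submodule (PowerSeries ℤ_[p]) M₁, (S : Set M₁).Finite → S = ⊥)
    (hfin₂ : ∀ S : Submodule (PowerSeries ℤ_[p]) M₂, (S : Set M₂).Finite → S = ⊥)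
    (hmod : Nonempty
      ((M₁ ⧸ (Ideal.span {(p : PowerSeries ℤ_[p])} • (⊤ : Submodule (PowerSeries ℤ_[p]) M₁)))
        ≃ₗ[PowerSeries ℤ_[p]]
       (M₂ ⧸ (Ideal.span {(p : PowerSeries ℤ_[p])} • (⊤ : Submodule (PowerSeries ℤ_[p]) M₂))))) :
    ∀ c₁ c₂ : ℕ,
      Nat.card {x : (Module.Dual (PowerSeries ℤ_[p]) (Module.Dual (PowerSeries ℤ_[p]) M₁)) ⧸
          LinearMap.range (Module.Dual.eval (PowerSeries ℤ_[p]) M₁) //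
            (p : PowerSeries ℤ_[p]) • x = 0} = p ^ c₁ →
      Nat.card {x : (Module.Dual (PowerSeries ℤ_[p]) (Module.Dual (PowerSeries ℤ_[p]) M₂)) ⧸
          LinearMap.range (Module.Dual.eval (PowerSeries ℤ_[p]) M₂) //
            (p : PowerSeries ℤ_[p]) • x = 0} = p ^ c₂ →
      Module.finrank ℤ_[p]
          ((Submodule.torsion (PowerSeries ℤ_[p]) M₁).restrictScalars ℤ_[p]) + c₁ =
        Module.finrank ℤ_[p]
          ((Submodule.torsion (PowerSeries ℤ_[p]) M₂).restrictScalars ℤ_[p]) + c₂ := by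
  intro c₁ c₂ hc₁ hc₂
  have h₁ := Iwa.card_W hμ₁ hfin₁ c₁ hc₁
  have h₂ := Iwa.card_W hμ₂ hfin₂ c₂ hc₂
  obtain ⟨e⟩ := hmod
  apply Nat.pow_right_injective (Fact.out : p.Prime).two_le
  change p ^ _ = p ^ _
  rw [← h₁, ← h₂]
  apply Nat.card_congr
  apply e.toEquiv.subtypeEquiv
  intro x
  apply exists_congr
  intro n
  change _ ↔ _ • e x = 0
  rw [← map_smul, LinearEquiv.map_eq_zero_iff]
end
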